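/- Let $m \geq 1$ and $\boldsymbol{\sigma} \in \{0,1\}^m$. The $L_2$ discrepancy of the symmetrized Hammersley point set $\mathcal{H}_m^{\rm sym}(\boldsymbol{\sigma})$ (a point set of $N = 2^{m+1}$ points) satisfies $(2^{m+1} L_2(\mathcal{H}_m^{\rm sym}(\boldsymbol{\sigma})))^2 = \frac{m}{24} + \frac{11}{8} + \frac{1}{2^m} - \frac{1}{9 \cdot 2^{2m+1}}$. In particular, this value is independent of the shift $\boldsymbol{\sigma}$. -/

import Mathlib

/-!
The integral is computed from Warnock's formula: for points `(x_p, y_p)` in the unit square and a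
volume constant `c`, expanding the square of the local discrepancy and integrating termwise gives
`∑_{p,q} (1 - max x_p x_q)(1 - max y_p y_q) - (c/2) ∑_p (1 - x_p²)(1 - y_p²) + c²/9` (`warnock`).

Put `M = 2^m`, `h = 2^{-m}` and use the centred coordinates `X = x + h/2 - 1/2`,
`Y = y + h/2 - 1/2`. Complementing the shift replaces `Y` by `-Y`, and complementing all bits of a
point negates both `X` and `Y`; so the symmetrized set is invariant under both reflections. With
`max a b = (a + b + |a - b|)/2`, everything odd in `X` or `Y` cancels and Warnock's formula reduces
to (`pairSum_eq`, `crossSum_eq`) the elementary sums `∑ X²`, `∑ Y²`, `∑∑ |X - X'|`, `∑∑ |Y - Y'|`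
and to
`F = ∑∑ |X - X'| |Y - Y'|`, `C = ∑∑ |X - X'| |Y + Y'|`, `Q = ∑ X² Y²`.

All of these are computed by recursion on the last bit `a`, with `r = ±1` according to `a`:
`X` becomes `X/2 + r/4`, and `Y` becomes `Y ± r h/4`. Distinct values of `Y` are at
least `h` apart (`cY_sep`), so the perturbation of `Y` never changes the sign of a nonzero
difference, and the absolute values can be opened. The recursion for `F` involves
`G = ∑∑ (X - X') sign (Y - Y')` and that for `Q` involves `W = ∑ X Y`, both of which depend on the
shift. Since `G = 4 M W` (`gSum_eq`), these contributions cancel in the combination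
`(F + C)/2 - 2 M Q` that occurs in Warnock's formula; hence the closed form `kSum_eq` and the
independence of the shift.
-/

open Finset

/-- Distance to the nearest integer. -/
noncomputable def dnn (x : ℝ) : ℝ := |x - round x|

/-- Real value of a bit. -/
def bitr (b : Bool) : ℝ := if b then 1 else 0

/-- First coordinate of a Hammersley point: t_m/2 + ... + t_1/2^m. -/
noncomputable def hamX (m : ℕ) (t : Fin m → Bool) : ℝ :=
  ∑ j : Fin m, bitr (t j) / 2 ^ (m - j.val)

/-- Second coordinate of a shifted Hammersley point: s_1/2 + ... + s_m/2^m with s_j = t_j ⊕ σ_j. -/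
noncomputable def hamY (m : ℕ) (σ t : Fin m → Bool) : ℝ :=
  ∑ j : Fin m, bitr (xor (t j) (σ j)) / 2 ^ (j.val + 1)

/-- Local discrepancy of the shifted Hammersley point set H_m(σ). -/
noncomputable def Δham (m : ℕ) (σ : Fin m → Bool) (α β : ℝ) : ℝ :=
  ((Finset.univ.filter (fun t : Fin m → Bool => hamX m t < α ∧ hamY m σ t < β)).card : ℝ)
    - 2 ^ m * α * β

/-- digit i (1-based) of an m-digit vector, with value false outside 1..m. -/
def dig (m : ℕ) (a : Fin m → Bool) (i : ℕ) : Bool :=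
  if h : 1 ≤ i ∧ i ≤ m then a ⟨i - 1, by omega⟩ else false

/-- The m-bit real number with binary digits a: ∑ a_j 2^{-j}. -/
noncomputable def mval (m : ℕ) (a : Fin m → Bool) : ℝ :=
  ∑ j : Fin m, bitr (a j) / 2 ^ (j.val + 1)

/-- The index function j(u) associated with digits a of α, digits b of β, and shift τ. -/
def jfun (m : ℕ) (a b τ : Fin m → Bool) (u : ℕ) : ℕ :=
  Nat.findGreatest (fun j => dig m a (m + 1 - j) ≠ xor (dig m b j) (dig m τ j)) u

/-- Smallest m-bit number ≥ α. -/
noncomputable def upm (m : ℕ) (α : ℝ) : ℝ := (⌈2 ^ m * α⌉ : ℝ) / 2 ^ m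

/-- Local discrepancy of the symmetrized Hammersley point set H_m(σ) ∪ H_m(σ*) (multiset union). -/
noncomputable def Δsym (m : ℕ) (σ : Fin m → Bool) (α β : ℝ) : ℝ :=
  (((Finset.univ.filter (fun t : Fin m → Bool => hamX m t < α ∧ hamY m σ t < β)).card : ℝ)
    + ((Finset.univ.filter (fun t : Fin m → Bool =>
        hamX m t < α ∧ hamY m (fun j => !(σ j)) t < β)).card : ℝ))
    - 2 ^ (m + 1) * α * β

/-! ### Warnock's formula -/

/-- The indicator function of `(z, ∞)`, as a function of its second argument. -/
noncomputable def wfun (z α : ℝ) : ℝ := if z < α then 1 else 0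

lemma wfun_integrable (z : ℝ) (g : ℝ → ℝ) (hg : Continuous g) :
    IntervalIntegrable (fun α => wfun z α * g α) MeasureTheory.volume 0 1 := by
  have h : (fun α => wfun z α * g α) = Set.indicator (Set.Ioi z) g := by
    funext α
    simp [wfun, Set.indicator]
  rw [h, intervalIntegrable_iff]
  exact ((intervalIntegrable_iff.mp (hg.intervalIntegrable 0 1))).indicator measurableSet_Ioi

lemma wfun_integral (z : ℝ) (h0 : 0 ≤ z) (h1 : z ≤ 1) (g : ℝ → ℝ) (hg : Continuous g) :
    ∫ α in (0:ℝ)..1, wfun z α * g α = ∫ α in z..1, g α := by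
  have hl : ∫ α in (0:ℝ)..z, wfun z α * g α = 0 := by
    rw [intervalIntegral.integral_congr (g := fun _ => (0:ℝ))]
    · simp
    · intro α hα
      rw [Set.uIcc_of_le h0] at hα
      simp [wfun, not_lt.mpr hα.2]
  have hr : ∫ α in z..1, wfun z α * g α = ∫ α in z..1, g α := by
    apply intervalIntegral.integral_congr_ae
    refine Filter.Eventually.of_forall fun α hα => ?_
    rw [Set.uIoc_of_le h1] at hα
    simp [wfun, hα.1]
  have hi := wfun_integrable z g hg
  rw [← intervalIntegral.integral_add_adjacent_intervals (b := z), hl, hr, zero_add]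
  · exact hi.mono_set (by rw [Set.uIcc_of_le h0, Set.uIcc_of_le zero_le_one]; exact Set.Icc_subset_Icc_right h1)
  · exact hi.mono_set (by rw [Set.uIcc_of_le h1, Set.uIcc_of_le zero_le_one]; exact Set.Icc_subset_Icc_left h0)

lemma wfun_mul (z w α : ℝ) : wfun z α * wfun w α = wfun (max z w) α := by
  unfold wfun
  by_cases h1 : z < α <;> by_cases h2 : w < α <;> simp [h1, h2]

/-- One-dimensional factors of the local discrepancy: a jump at each point coordinate and, at `none`,
the identity coming from the volume term. -/
noncomputable def fac {ι : Type*} (x : ι → ℝ) : Option ι → ℝ → ℝ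
  | none, α => α
  | some p, α => wfun (x p) α

lemma fac_integrable {ι : Type*} (x : ι → ℝ) (k l : Option ι) :
    IntervalIntegrable (fun α => fac x k α * fac x l α) MeasureTheory.volume 0 1 := by
  rcases k with _ | p <;> rcases l with _ | q
  · exact (continuous_id.mul continuous_id).intervalIntegrable 0 1
  · simpa [fac, mul_comm] using wfun_integrable (x q) id continuous_id
  · simpa [fac] using wfun_integrable (x p) id continuous_id
  · simpa [fac, wfun_mul] using wfun_integrable (max (x p) (x q)) (fun _ => 1) continuous_const

/-- Termwise integration of a finite sum of products `w k * u k α * v k β`. -/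
lemma integral_sum_prod {κ : Type*} [Fintype κ] (w : κ → ℝ) (u v : κ → ℝ → ℝ)
    (hu : ∀ k, IntervalIntegrable (u k) MeasureTheory.volume 0 1)
    (hv : ∀ k, IntervalIntegrable (v k) MeasureTheory.volume 0 1) :
    ∫ α in (0:ℝ)..1, ∫ β in (0:ℝ)..1, ∑ k, w k * u k α * v k β
      = ∑ k, w k * (∫ α in (0:ℝ)..1, u k α) * ∫ β in (0:ℝ)..1, v k β := by
  have h1 : ∀ α : ℝ, ∫ β in (0:ℝ)..1, ∑ k, w k * u k α * v k β
      = ∑ k, (w k * ∫ β in (0:ℝ)..1, v k β) * u k α := by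
    intro α
    rw [intervalIntegral.integral_finsetSum fun k _ => (hv k).const_mul _]
    refine Finset.sum_congr rfl fun k _ => ?_
    rw [intervalIntegral.integral_const_mul]
    ring
  simp_rw [h1]
  rw [intervalIntegral.integral_finsetSum fun k _ => (hu k).const_mul _]
  refine Finset.sum_congr rfl fun k _ => ?_
  rw [intervalIntegral.integral_const_mul]
  ring

/-- Warnock's formula for the squared `L₂` norm of the local discrepancy, with an arbitrary
constant `c` in the volume term. -/
lemma warnock {ι : Type*} [Fintype ι] (x y : ι → ℝ) (hx : ∀ p, 0 ≤ x p ∧ x p ≤ 1)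
    (hy : ∀ p, 0 ≤ y p ∧ y p ≤ 1) (c : ℝ) :
    ∫ α in (0:ℝ)..1, ∫ β in (0:ℝ)..1,
        ((∑ p, wfun (x p) α * wfun (y p) β) - c * α * β) ^ 2
      = (∑ p, ∑ q, (1 - max (x p) (x q)) * (1 - max (y p) (y q)))
        - c / 2 * (∑ p, (1 - x p ^ 2) * (1 - y p ^ 2)) + c ^ 2 / 9 := by
  let w : Option ι → ℝ := fun k => k.elim (-c) (fun _ => 1)
  have hsq : ∀ α β : ℝ, ((∑ p, wfun (x p) α * wfun (y p) β) - c * α * β) ^ 2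
      = ∑ k : Option ι × Option ι, w k.1 * w k.2 * (fac x k.1 α * fac x k.2 α)
          * (fac y k.1 β * fac y k.2 β) := by
    intro α β
    have : (∑ p, wfun (x p) α * wfun (y p) β) - c * α * β
        = ∑ k : Option ι, w k * fac x k α * fac y k β := by
      simp [Fintype.sum_option, w, fac]
      ring
    rw [this, sq, Finset.sum_mul_sum, Fintype.sum_prod_type]
    refine Finset.sum_congr rfl fun k _ => Finset.sum_congr rfl fun l _ => ?_
    ring
  simp_rw [hsq]
  rw [integral_sum_prod (fun k : Option ι × Option ι => w k.1 * w k.2)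
    (fun k α => fac x k.1 α * fac x k.2 α) (fun k β => fac y k.1 β * fac y k.2 β)
    (fun k => fac_integrable x k.1 k.2) (fun k => fac_integrable y k.1 k.2)]
  have hI0 : ∫ α in (0:ℝ)..1, α * α = 1 / 3 := by
    simp_rw [← sq]; rw [integral_pow]; norm_num
  have hI1 : ∀ z : ℝ, 0 ≤ z → z ≤ 1 → ∫ α in (0:ℝ)..1, wfun z α * α = (1 - z ^ 2) / 2 := by
    intro z h0 h1
    rw [wfun_integral z h0 h1 (fun α => α) continuous_id, integral_id]; norm_num
  have hI2 : ∀ z : ℝ, 0 ≤ z → z ≤ 1 → ∫ α in (0:ℝ)..1, wfun z α = 1 - z := by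
    intro z h0 h1
    have := wfun_integral z h0 h1 (fun _ => 1) continuous_const
    simpa using this
  have hI1' : ∀ z : ℝ, 0 ≤ z → z ≤ 1 → ∫ α in (0:ℝ)..1, α * wfun z α = (1 - z ^ 2) / 2 := by
    intro z h0 h1
    simp_rw [mul_comm _ (wfun z _)]
    exact hI1 z h0 h1
  have hx2 : ∀ p q, ∫ α in (0:ℝ)..1, wfun (max (x p) (x q)) α = 1 - max (x p) (x q) :=
    fun p q => hI2 _ (le_max_of_le_left (hx p).1) (max_le (hx p).2 (hx q).2)
  have hy2 : ∀ p q, ∫ α in (0:ℝ)..1, wfun (max (y p) (y q)) α = 1 - max (y p) (y q) :=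
    fun p q => hI2 _ (le_max_of_le_left (hy p).1) (max_le (hy p).2 (hy q).2)
  simp only [Fintype.sum_prod_type, Fintype.sum_option, fac, w, Option.elim, wfun_mul, hx2, hy2, hI0,
    hI1 _ (hx _).1 (hx _).2, hI1 _ (hy _).1 (hy _).2, hI1' _ (hx _).1 (hx _).2,
    hI1' _ (hy _).1 (hy _).2, Finset.sum_add_distrib, Finset.mul_sum]
  have e1 : ∀ p, -c * 1 * ((1 - x p ^ 2) / 2) * ((1 - y p ^ 2) / 2)
      = -c / 4 * ((1 - x p ^ 2) * (1 - y p ^ 2)) := fun p => by ring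
  simp only [mul_one, one_mul] at e1 ⊢
  simp only [e1, ← Finset.mul_sum]
  ring

/-! ### Centred coordinates and the recursion on the last bit -/

/-- The sign `±1` of a bit. -/
def rad (a : Bool) : ℝ := if a then 1 else -1

/-- First coordinate of a Hammersley point, translated so that the values are symmetric about 0. -/
noncomputable def cX (m : ℕ) (t : Fin m → Bool) : ℝ := hamX m t + 1 / 2 ^ m / 2 - 1 / 2

/-- Second coordinate of a shifted Hammersley point, translated so that the values are symmetric
about 0. -/
noncomputable def cY (m : ℕ) (σ t : Fin m → Bool) : ℝ := hamY m σ t + 1 / 2 ^ m / 2 - 1 / 2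

lemma cX_snoc (m : ℕ) (t : Fin m → Bool) (a : Bool) :
    cX (m + 1) (Fin.snoc t a) = cX m t / 2 + rad a / 4 := by
  have h : hamX (m + 1) (Fin.snoc t a) = hamX m t / 2 + bitr a / 2 := by
    unfold hamX
    rw [Fin.sum_univ_castSucc, Finset.sum_div]
    congr 1
    · refine Finset.sum_congr rfl fun j _ => ?_
      have : m + 1 - j.val = (m - j.val) + 1 := by omega
      simp only [Fin.snoc_castSucc, Fin.val_castSucc, this, pow_succ]
      field_simp
    · simp
  unfold cX
  rw [h, pow_succ]
  cases a <;> simp [bitr, rad] <;> ring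

lemma cY_snoc (m : ℕ) (σ : Fin (m + 1) → Bool) (t : Fin m → Bool) (a : Bool) :
    cY (m + 1) σ (Fin.snoc t a)
      = cY m (Fin.init σ) t - rad (σ (Fin.last m)) * rad a * (1 / 2 ^ m / 4) := by
  have h : hamY (m + 1) σ (Fin.snoc t a)
      = hamY m (Fin.init σ) t + bitr (xor a (σ (Fin.last m))) / 2 ^ (m + 1) := by
    unfold hamY
    rw [Fin.sum_univ_castSucc]
    simp [Fin.init]
  unfold cY
  rw [h, pow_succ]
  cases a <;> cases σ (Fin.last m) <;> simp [bitr, rad] <;> ring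

lemma cX_zero (t : Fin 0 → Bool) : cX 0 t = 0 := by simp [cX, hamX]
lemma cY_zero (σ t : Fin 0 → Bool) : cY 0 σ t = 0 := by simp [cY, hamY]

lemma sum_snoc (m : ℕ) (f : (Fin (m + 1) → Bool) → ℝ) :
    ∑ t, f t = ∑ t : Fin m → Bool, (f (Fin.snoc t true) + f (Fin.snoc t false)) := by
  rw [← (Fin.snocEquiv (fun _ => Bool)).sum_comp, Fintype.sum_prod_type]
  simp [Fin.snocEquiv, Finset.sum_add_distrib]

/-- Induction on bit vectors by appending a last bit. -/
lemma snoc_ind {P : (m : ℕ) → (Fin m → Bool) → Prop} (h0 : ∀ t, P 0 t)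
    (h1 : ∀ m t a, P m t → P (m + 1) (Fin.snoc t a)) : ∀ m t, P m t
  | 0, t => h0 t
  | m + 1, t => by
    rw [← Fin.snoc_init_self t]
    exact h1 m _ _ (snoc_ind h0 h1 m _)

lemma rad_cases (a : Bool) : rad a = 1 ∨ rad a = -1 := by cases a <;> simp [rad]

lemma abs_cX_le (m : ℕ) (t : Fin m → Bool) : |cX m t| ≤ 1 / 2 - 1 / 2 ^ m / 2 := by
  induction m, t using snoc_ind with
  | h0 t => simp [cX_zero]
  | h1 m t a ih =>
    rw [cX_snoc, pow_succ]
    rw [abs_le] at ih ⊢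
    have : (1:ℝ) / (2 ^ m * 2) = 1 / 2 ^ m / 2 := by field_simp
    rw [this]
    rcases rad_cases a with h | h <;> rw [h] <;> constructor <;> linarith

lemma abs_cY_le (m : ℕ) (σ t : Fin m → Bool) : |cY m σ t| ≤ 1 / 2 - 1 / 2 ^ m / 2 := by
  induction m, t using snoc_ind with
  | h0 t => simp [cY_zero]
  | h1 m t a ih =>
    have ih := ih (Fin.init σ)
    rw [cY_snoc, pow_succ]
    rw [abs_le] at ih ⊢
    have : (1:ℝ) / (2 ^ m * 2) = 1 / 2 ^ m / 2 := by field_simp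
    rw [this]
    have hp : (0:ℝ) < 1 / 2 ^ m := by positivity
    rcases rad_cases a with h | h <;> rcases rad_cases (σ (Fin.last m)) with h' | h' <;>
      rw [h, h'] <;> constructor <;> linarith

/-- Complementing all bits. -/
def flipAll (m : ℕ) : (Fin m → Bool) ≃ (Fin m → Bool) where
  toFun t j := !(t j)
  invFun t j := !(t j)
  left_inv t := by simp
  right_inv t := by simp

lemma compl_snoc (m : ℕ) (t : Fin m → Bool) (a : Bool) :
    flipAll (m + 1) (Fin.snoc t a) = Fin.snoc (flipAll m t) (!a) := by
  funext j
  refine Fin.lastCases ?_ (fun i => ?_) j <;> simp [flipAll]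

lemma rad_not (a : Bool) : rad (!a) = - rad a := by cases a <;> simp [rad]

lemma cX_compl (m : ℕ) (t : Fin m → Bool) : cX m (flipAll m t) = - cX m t := by
  induction m, t using snoc_ind with
  | h0 t => simp [cX_zero]
  | h1 m t a ih => rw [compl_snoc, cX_snoc, cX_snoc, ih, rad_not]; ring

lemma cY_compl (m : ℕ) (σ t : Fin m → Bool) : cY m σ (flipAll m t) = - cY m σ t := by
  induction m, t using snoc_ind with
  | h0 t => simp [cY_zero]
  | h1 m t a ih => rw [compl_snoc, cY_snoc, cY_snoc, ih, rad_not]; ring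

lemma cY_compl_shift (m : ℕ) (σ t : Fin m → Bool) : cY m (fun j => !(σ j)) t = - cY m σ t := by
  rw [← cY_compl]
  simp [cY, hamY, flipAll]

/-- The second coordinates of distinct points are at least `2^{-m}` apart. -/
lemma cY_sep (m : ℕ) (σ t t' : Fin m → Bool) (h : t ≠ t') :
    1 / 2 ^ m ≤ |cY m σ t - cY m σ t'| := by
  induction m, t using snoc_ind with
  | h0 t => exact absurd (Subsingleton.elim _ _) h
  | h1 m t a ih =>
    rw [← Fin.snoc_init_self t'] at h ⊢
    set u := Fin.init t'
    set b := t' (Fin.last m)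
    have ih := ih (Fin.init σ) u
    rw [cY_snoc, cY_snoc, pow_succ]
    have : (1:ℝ) / (2 ^ m * 2) = 1 / 2 ^ m / 2 := by field_simp
    rw [this]
    have hp : (0:ℝ) < 1 / 2 ^ m := by positivity
    by_cases htu : t = u
    · have hab : a ≠ b := fun hab => h (by rw [htu, hab])
      have hb : rad b = - rad a := by rw [← rad_not]; congr 1; revert hab; cases a <;> cases b <;> simp
      rw [htu, hb, le_abs]
      rcases rad_cases a with h | h <;> rcases rad_cases (σ (Fin.last m)) with h' | h' <;>
        rw [h, h'] <;> first | (left; linarith) | (right; linarith)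
    · have ih := ih htu
      rw [le_abs] at ih ⊢
      rcases ih with ih | ih <;> rcases rad_cases a with h | h <;> rcases rad_cases b with h2 | h2 <;>
        rcases rad_cases (σ (Fin.last m)) with h' | h' <;>
        rw [h, h', h2] <;> first | (left; linarith) | (right; linarith)

lemma card_bits (m : ℕ) : ((Finset.univ : Finset (Fin m → Bool)).card : ℝ) = 2 ^ m := by
  simp [Finset.card_univ]

lemma eSum_succ (m : ℕ) : ∑ t, |cX (m + 1) t| = 2 ^ m / 2 := by
  rw [sum_snoc]
  have : ∀ t : Fin m → Bool, |cX (m + 1) (Fin.snoc t true)| + |cX (m + 1) (Fin.snoc t false)|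
      = 1 / 2 := by
    intro t
    have h := abs_le.mp (abs_cX_le m t)
    have hp : (0:ℝ) < 1 / 2 ^ m := by positivity
    rw [cX_snoc, cX_snoc, abs_of_nonneg, abs_of_nonpos] <;> simp [rad] <;> linarith
  simp_rw [this]
  rw [Finset.sum_const, nsmul_eq_mul, card_bits]; ring

lemma sqSum_cX (m : ℕ) : ∑ t, cX m t ^ 2 = (2 ^ m - 1 / 2 ^ m) / 12 := by
  induction m with
  | zero => simp [cX_zero]
  | succ m ih =>
    have : ∀ t : Fin m → Bool, cX (m + 1) (Fin.snoc t true) ^ 2 + cX (m + 1) (Fin.snoc t false) ^ 2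
        = 1 / 2 * cX m t ^ 2 + 1 / 8 := by
      intro t; rw [cX_snoc, cX_snoc]; simp [rad]; ring
    rw [sum_snoc]
    simp_rw [this]
    rw [Finset.sum_add_distrib, ← Finset.mul_sum, ih, Finset.sum_const, nsmul_eq_mul, card_bits]
    field_simp; ring

lemma sqSum_cY (m : ℕ) (σ : Fin m → Bool) : ∑ t, cY m σ t ^ 2 = (2 ^ m - 1 / 2 ^ m) / 12 := by
  induction m with
  | zero => simp [cY_zero]
  | succ m ih =>
    have : ∀ t : Fin m → Bool, cY (m + 1) σ (Fin.snoc t true) ^ 2 + cY (m + 1) σ (Fin.snoc t false) ^ 2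
        = 2 * cY m (Fin.init σ) t ^ 2 + (1 / 2 ^ m) ^ 2 / 8 := by
      intro t; rw [cY_snoc, cY_snoc]
      rcases rad_cases (σ (Fin.last m)) with h | h <;> rw [h] <;> simp [rad] <;> ring
    rw [sum_snoc]
    simp_rw [this]
    rw [Finset.sum_add_distrib, ← Finset.mul_sum, ih, Finset.sum_const, nsmul_eq_mul, card_bits]
    field_simp; ring


/-- The sum `W` of `X Y`. -/
noncomputable def wSum (m : ℕ) (σ : Fin m → Bool) : ℝ := ∑ t, cX m t * cY m σ t

/-- The sum `Q` of `X² Y²`. -/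
noncomputable def qSum (m : ℕ) (σ : Fin m → Bool) : ℝ := ∑ t, cX m t ^ 2 * cY m σ t ^ 2

/-- The double sum `G` of `(X - X') sign (Y - Y')`. -/
noncomputable def gSum (m : ℕ) (σ : Fin m → Bool) : ℝ :=
  ∑ t, ∑ u, (cX m t - cX m u) * (SignType.sign (cY m σ t - cY m σ u) : ℝ)

/-- The double sum `F` of `|X - X'| |Y - Y'|`. -/
noncomputable def fSum (m : ℕ) (σ : Fin m → Bool) : ℝ :=
  ∑ t, ∑ u, |cX m t - cX m u| * |cY m σ t - cY m σ u|

/-- The double sum `C` of `|X - X'| |Y + Y'|`, coming from a point of each copy. -/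
noncomputable def cSum (m : ℕ) (σ : Fin m → Bool) : ℝ :=
  ∑ t, ∑ u, |cX m t - cX m u| * |cY m σ t + cY m σ u|

/-- The double sum of `|Y - Y'|`. -/
noncomputable def bSum (m : ℕ) (σ : Fin m → Bool) : ℝ :=
  ∑ t, ∑ u, |cY m σ t - cY m σ u|

/-- The double sum of `|X - X'|`. -/
noncomputable def aSum (m : ℕ) : ℝ :=
  ∑ t, ∑ u, |cX m t - cX m u|

lemma wSum_succ (m : ℕ) (σ : Fin (m + 1) → Bool) :
    wSum (m + 1) σ = wSum m (Fin.init σ) - rad (σ (Fin.last m)) / 8 := by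
  have : ∀ t : Fin m → Bool, cX (m + 1) (Fin.snoc t true) * cY (m + 1) σ (Fin.snoc t true)
      + cX (m + 1) (Fin.snoc t false) * cY (m + 1) σ (Fin.snoc t false)
      = cX m t * cY m (Fin.init σ) t - rad (σ (Fin.last m)) * (1 / 2 ^ m) / 8 := by
    intro t; simp_rw [cX_snoc, cY_snoc]
    rcases rad_cases (σ (Fin.last m)) with h | h <;> rw [h] <;> simp [rad] <;> ring
  unfold wSum
  rw [sum_snoc]
  simp_rw [this]
  rw [Finset.sum_sub_distrib, Finset.sum_const, nsmul_eq_mul, card_bits]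
  field_simp

lemma qSum_succ (m : ℕ) (σ : Fin (m + 1) → Bool) :
    qSum (m + 1) σ = qSum m (Fin.init σ) / 2 + (2 ^ m - 1 / 2 ^ m) / 96
      + (1 / 2 ^ m) ^ 2 / 32 * ((2 ^ m - 1 / 2 ^ m) / 12) + 1 / 2 ^ m / 128
      - rad (σ (Fin.last m)) * wSum m (Fin.init σ) * (1 / 2 ^ m) / 4 := by
  have : ∀ t : Fin m → Bool, cX (m + 1) (Fin.snoc t true) ^ 2 * cY (m + 1) σ (Fin.snoc t true) ^ 2
      + cX (m + 1) (Fin.snoc t false) ^ 2 * cY (m + 1) σ (Fin.snoc t false) ^ 2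
      = 1 / 2 * (cX m t ^ 2 * cY m (Fin.init σ) t ^ 2) + 1 / 8 * cY m (Fin.init σ) t ^ 2
        + (1 / 2 ^ m) ^ 2 / 32 * cX m t ^ 2 + (1 / 2 ^ m) ^ 2 / 128
        - rad (σ (Fin.last m)) * (1 / 2 ^ m) / 4 * (cX m t * cY m (Fin.init σ) t) := by
    intro t; simp_rw [cX_snoc, cY_snoc]
    rcases rad_cases (σ (Fin.last m)) with h | h <;> rw [h] <;> simp [rad] <;> ring
  unfold qSum
  rw [sum_snoc]
  simp_rw [this]
  rw [Finset.sum_sub_distrib, Finset.sum_add_distrib, Finset.sum_add_distrib,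
    Finset.sum_add_distrib, ← Finset.mul_sum, ← Finset.mul_sum, ← Finset.mul_sum, ← Finset.mul_sum,
    sqSum_cX, sqSum_cY, Finset.sum_const, nsmul_eq_mul, card_bits, ← wSum]
  field_simp
  ring

/-! ### Double sums over pairs of points -/

lemma sum_snoc₂ (m : ℕ) (f : (Fin (m + 1) → Bool) → (Fin (m + 1) → Bool) → ℝ) :
    ∑ t, ∑ t', f t t' = ∑ t : Fin m → Bool, ∑ t' : Fin m → Bool,
      (f (Fin.snoc t true) (Fin.snoc t' true) + f (Fin.snoc t true) (Fin.snoc t' false)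
        + f (Fin.snoc t false) (Fin.snoc t' true) + f (Fin.snoc t false) (Fin.snoc t' false)) := by
  rw [sum_snoc]
  refine Finset.sum_congr rfl fun t _ => ?_
  rw [sum_snoc, sum_snoc, ← Finset.sum_add_distrib]
  refine Finset.sum_congr rfl fun t' _ => ?_
  ring

lemma sum_const₂ (m : ℕ) (c : ℝ) :
    ∑ _t : Fin m → Bool, ∑ _t' : Fin m → Bool, c = (2 ^ m) ^ 2 * c := by
  simp only [Finset.sum_const, nsmul_eq_mul, card_bits]; ring

lemma abs_cX_sub_lt (m : ℕ) (t t' : Fin m → Bool) : |cX m t - cX m t'| < 1 := by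
  have h := abs_le.mp (abs_cX_le m t)
  have h' := abs_le.mp (abs_cX_le m t')
  have hp : (0:ℝ) < 1 / 2 ^ m := by positivity
  rw [abs_lt]; constructor <;> linarith

lemma aSum_eq (m : ℕ) : aSum m = ((2 ^ m) ^ 2 - 1) / 3 := by
  induction m with
  | zero => simp [aSum, cX_zero]
  | succ m ih =>
    unfold aSum at ih ⊢
    rw [sum_snoc₂]
    have : ∀ t t' : Fin m → Bool,
        |cX (m + 1) (Fin.snoc t true) - cX (m + 1) (Fin.snoc t' true)|
        + |cX (m + 1) (Fin.snoc t true) - cX (m + 1) (Fin.snoc t' false)|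
        + |cX (m + 1) (Fin.snoc t false) - cX (m + 1) (Fin.snoc t' true)|
        + |cX (m + 1) (Fin.snoc t false) - cX (m + 1) (Fin.snoc t' false)|
        = |cX m t - cX m t'| + 1 := by
      intro t t'
      obtain ⟨h1, h2⟩ := abs_lt.mp (abs_cX_sub_lt m t t')
      simp_rw [cX_snoc]
      have e1 : cX m t / 2 + rad true / 4 - (cX m t' / 2 + rad true / 4)
        = (cX m t - cX m t') / 2 := by ring
      have e2 : cX m t / 2 + rad false / 4 - (cX m t' / 2 + rad false / 4)
        = (cX m t - cX m t') / 2 := by ring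
      rw [e1, e2, abs_of_pos (a := cX m t / 2 + rad true / 4 - (cX m t' / 2 + rad false / 4)),
        abs_of_neg (a := cX m t / 2 + rad false / 4 - (cX m t' / 2 + rad true / 4)), abs_div] <;>
        simp [rad] <;> linarith
    simp_rw [this, Finset.sum_add_distrib]
    rw [sum_const₂, ih]; ring

lemma abs_pair {v k : ℝ} (hk : 0 ≤ k) (hv : 2 * k ≤ |v|) :
    |v - 2 * k| + |v + 2 * k| = 2 * |v| := by
  rcases le_abs.mp hv with h | h
  · rw [abs_of_nonneg, abs_of_nonneg, abs_of_nonneg] <;> linarith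
  · rw [abs_of_nonpos, abs_of_nonpos, abs_of_nonpos] <;> linarith

lemma bSum_eq (m : ℕ) (σ : Fin m → Bool) : bSum m σ = ((2 ^ m) ^ 2 - 1) / 3 := by
  induction m with
  | zero => simp [bSum, cY_zero]
  | succ m ih =>
    have ih := ih (Fin.init σ)
    unfold bSum at ih ⊢
    rw [sum_snoc₂]
    have : ∀ t t' : Fin m → Bool,
        |cY (m + 1) σ (Fin.snoc t true) - cY (m + 1) σ (Fin.snoc t' true)|
        + |cY (m + 1) σ (Fin.snoc t true) - cY (m + 1) σ (Fin.snoc t' false)|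
        + |cY (m + 1) σ (Fin.snoc t false) - cY (m + 1) σ (Fin.snoc t' true)|
        + |cY (m + 1) σ (Fin.snoc t false) - cY (m + 1) σ (Fin.snoc t' false)|
        = 4 * |cY m (Fin.init σ) t - cY m (Fin.init σ) t'| + if t = t' then 1 / 2 ^ m else 0 := by
      intro t t'
      have hp : (0:ℝ) < 1 / 2 ^ m := by positivity
      have key : ∀ k v : ℝ, v = cY m (Fin.init σ) t - cY m (Fin.init σ) t' → k = 1 / 2 ^ m / 4 →
          2 * |v| + (|v - 2 * k| + |v + 2 * k|) = 4 * |v| + if t = t' then 1 / 2 ^ m else 0 := by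
        intro k v hv hk
        split_ifs with h
        · subst h
          rw [sub_self] at hv
          subst hv
          rw [zero_sub, zero_add, abs_neg, abs_zero, hk, abs_of_pos (by linarith)]; ring
        · have := cY_sep m (Fin.init σ) t t' h
          rw [← hv] at this
          rw [abs_pair (by rw [hk]; linarith) (by rw [hk]; linarith)]; ring
      rw [← key _ _ rfl rfl]
      simp_rw [cY_snoc]
      rcases rad_cases (σ (Fin.last m)) with h | h <;> rw [h] <;> simp [rad] <;> ring_nf
    simp_rw [this, Finset.sum_add_distrib]
    simp only [Finset.sum_ite_eq, Finset.mem_univ, if_true, ← Finset.mul_sum, Finset.sum_const,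
      nsmul_eq_mul, card_bits, ih]
    field_simp; ring

/-- Links the two quantities that depend on the shift. -/
lemma gSum_eq (m : ℕ) (σ : Fin m → Bool) : gSum m σ = 4 * 2 ^ m * wSum m σ := by
  induction m with
  | zero => simp [gSum, wSum, cX_zero, cY_zero]
  | succ m ih =>
    have ih := ih (Fin.init σ)
    rw [wSum_succ]
    unfold gSum at ih ⊢
    rw [sum_snoc₂]
    simp_rw [cX_snoc, cY_snoc]
    set e := rad (σ (Fin.last m)) with he
    have : ∀ t t' : Fin m → Bool, ∀ x x' y y' : ℝ, x = cX m t → x' = cX m t' →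
        y = cY m (Fin.init σ) t → y' = cY m (Fin.init σ) t' → ∀ k : ℝ, k = 1 / 2 ^ m / 4 →
        (x / 2 + rad true / 4 - (x' / 2 + rad true / 4))
          * (SignType.sign (y - e * rad true * k - (y' - e * rad true * k)) : ℝ)
        + (x / 2 + rad true / 4 - (x' / 2 + rad false / 4))
          * (SignType.sign (y - e * rad true * k - (y' - e * rad false * k)) : ℝ)
        + (x / 2 + rad false / 4 - (x' / 2 + rad true / 4))
          * (SignType.sign (y - e * rad false * k - (y' - e * rad true * k)) : ℝ)
        + (x / 2 + rad false / 4 - (x' / 2 + rad false / 4))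
          * (SignType.sign (y - e * rad false * k - (y' - e * rad false * k)) : ℝ)
        = 2 * ((x - x') * (SignType.sign (y - y') : ℝ)) + if t = t' then -e else 0 := by
      intro t t' x x' y y' hx hx' hy hy' k hk
      have hp : (0:ℝ) < 1 / 2 ^ m := by positivity
      have hk0 : 0 < k := by rw [hk]; linarith
      rw [show y - e * rad true * k - (y' - e * rad true * k) = y - y' by ring,
        show y - e * rad false * k - (y' - e * rad false * k) = y - y' by ring]
      have ht : rad true = 1 := rfl
      have hf : rad false = -1 := rfl
      split_ifs with h
      · subst h
        subst hx hx' hy hy'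
        rw [ht, hf]
        rcases rad_cases (σ (Fin.last m)) with h | h <;> rw [he, h]
        · rw [sign_neg (show cY m (Fin.init σ) t - 1 * 1 * k - (cY m (Fin.init σ) t - 1 * -1 * k) < 0
            by linarith), sign_pos (show 0 < cY m (Fin.init σ) t - 1 * -1 * k
              - (cY m (Fin.init σ) t - 1 * 1 * k) by linarith)]
          simp; ring
        · rw [sign_pos (show 0 < cY m (Fin.init σ) t - -1 * 1 * k - (cY m (Fin.init σ) t - -1 * -1 * k)
            by linarith), sign_neg (show cY m (Fin.init σ) t - -1 * -1 * k
              - (cY m (Fin.init σ) t - -1 * 1 * k) < 0 by linarith)]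
          simp; ring
      · have hs := cY_sep m (Fin.init σ) t t' h
        rw [← hy, ← hy', le_abs] at hs
        rw [ht, hf]
        have hek : |e * k| = k := by
          rcases rad_cases (σ (Fin.last m)) with h | h <;> rw [he, h] <;> simp [abs_of_pos hk0]
        obtain ⟨h1, h2⟩ := abs_le.mp hek.le
        rcases hs with hs | hs
        · rw [sign_pos (show 0 < y - y' by linarith),
            sign_pos (show 0 < y - e * 1 * k - (y' - e * -1 * k) by linarith),
            sign_pos (show 0 < y - e * -1 * k - (y' - e * 1 * k) by linarith)]
          simp; ring
        · rw [sign_neg (show y - y' < 0 by linarith),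
            sign_neg (show y - e * 1 * k - (y' - e * -1 * k) < 0 by linarith),
            sign_neg (show y - e * -1 * k - (y' - e * 1 * k) < 0 by linarith)]
          simp; ring
    simp_rw [fun t t' => this t t' _ _ _ _ rfl rfl rfl rfl _ rfl, Finset.sum_add_distrib]
    simp only [Finset.sum_ite_eq, Finset.mem_univ, if_true, ← Finset.mul_sum, Finset.sum_const,
      nsmul_eq_mul, card_bits, ih]
    ring

/-- The terms with `t ≠ t'` contribute through `G` because both signs of the perturbation of
`Y - Y'` occur, weighted by `(1 ± (X - X')) / 2`; the diagonal contributes the constant `1 / 2`. -/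
lemma fSum_succ (m : ℕ) (σ : Fin (m + 1) → Bool) :
    fSum (m + 1) σ = fSum m (Fin.init σ) + bSum m (Fin.init σ) + 1 / 2
      - rad (σ (Fin.last m)) * (1 / 2 ^ m / 2) * gSum m (Fin.init σ) := by
  unfold fSum bSum gSum
  rw [sum_snoc₂]
  simp_rw [cX_snoc, cY_snoc]
  set e := rad (σ (Fin.last m)) with he
  have : ∀ t t' : Fin m → Bool, ∀ x x' y y' : ℝ, x = cX m t → x' = cX m t' →
      y = cY m (Fin.init σ) t → y' = cY m (Fin.init σ) t' → ∀ k : ℝ, k = 1 / 2 ^ m / 4 →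
      |x / 2 + rad true / 4 - (x' / 2 + rad true / 4)|
        * |y - e * rad true * k - (y' - e * rad true * k)|
      + |x / 2 + rad true / 4 - (x' / 2 + rad false / 4)|
        * |y - e * rad true * k - (y' - e * rad false * k)|
      + |x / 2 + rad false / 4 - (x' / 2 + rad true / 4)|
        * |y - e * rad false * k - (y' - e * rad true * k)|
      + |x / 2 + rad false / 4 - (x' / 2 + rad false / 4)|
        * |y - e * rad false * k - (y' - e * rad false * k)|
      = |x - x'| * |y - y'| + |y - y'| + (if t = t' then 2 * k else 0)
        - e * (1 / 2 ^ m / 2) * ((x - x') * (SignType.sign (y - y') : ℝ)) := by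
    intro t t' x x' y y' hx hx' hy hy' k hk
    have hp : (0:ℝ) < 1 / 2 ^ m := by positivity
    have hk0 : 0 < k := by rw [hk]; linarith
    obtain ⟨hX1, hX2⟩ := abs_lt.mp (abs_cX_sub_lt m t t')
    rw [← hx, ← hx'] at hX1 hX2
    have hk2 : (1:ℝ) / 2 ^ m / 2 = 2 * k := by rw [hk]; ring
    have hek : |e * k| = k := by
      rcases rad_cases (σ (Fin.last m)) with h | h <;> rw [he, h] <;> simp [abs_of_pos hk0]
    rw [hk2, show y - e * rad true * k - (y' - e * rad true * k) = y - y' by ring,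
      show y - e * rad false * k - (y' - e * rad false * k) = y - y' by ring,
      show x / 2 + rad true / 4 - (x' / 2 + rad true / 4) = (x - x') / 2 by ring,
      show x / 2 + rad false / 4 - (x' / 2 + rad false / 4) = (x - x') / 2 by ring,
      show rad true = 1 from rfl, show rad false = -1 from rfl,
      abs_of_pos (show 0 < x / 2 + 1 / 4 - (x' / 2 + -1 / 4) by linarith),
      abs_of_neg (show x / 2 + -1 / 4 - (x' / 2 + 1 / 4) < 0 by linarith),
      show y - e * 1 * k - (y' - e * -1 * k) = y - y' - 2 * (e * k) by ring,
      show y - e * -1 * k - (y' - e * 1 * k) = y - y' + 2 * (e * k) by ring, abs_div, abs_two]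
    split_ifs with h
    · subst h
      subst hx hx' hy hy'
      simp only [sub_self, abs_zero, zero_sub, zero_add, abs_neg, abs_mul, abs_two]
      rw [← abs_mul, hek]; ring
    · have hs := cY_sep m (Fin.init σ) t t' h
      rw [← hy, ← hy', le_abs] at hs
      obtain ⟨h1, h2⟩ := abs_le.mp hek.le
      rcases hs with hs | hs
      · rw [sign_pos (show 0 < y - y' by linarith), abs_of_pos (show 0 < y - y' by linarith),
          abs_of_nonneg (show 0 ≤ y - y' - 2 * (e * k) by linarith),
          abs_of_nonneg (show 0 ≤ y - y' + 2 * (e * k) by linarith)]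
        simp; ring
      · rw [sign_neg (show y - y' < 0 by linarith), abs_of_neg (show y - y' < 0 by linarith),
          abs_of_nonpos (show y - y' - 2 * (e * k) ≤ 0 by linarith),
          abs_of_nonpos (show y - y' + 2 * (e * k) ≤ 0 by linarith)]
        simp; ring
  simp_rw [fun t t' => this t t' _ _ _ _ rfl rfl rfl rfl _ rfl, Finset.sum_sub_distrib,
    Finset.sum_add_distrib]
  simp only [Finset.sum_ite_eq, Finset.mem_univ, if_true, ← Finset.mul_sum, Finset.sum_const,
    nsmul_eq_mul, card_bits]
  field_simp; ring

lemma sum_flip (m : ℕ) (f : (Fin m → Bool) → ℝ) : ∑ t, f (flipAll m t) = ∑ t, f t :=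
  (flipAll m).sum_comp f

/-- Complementing `t'` moves the reflection from the `Y` factor to the `X` factor. -/
lemma cSum_eq (m : ℕ) (σ : Fin m → Bool) :
    cSum m σ = ∑ t, ∑ t', |cX m t + cX m t'| * |cY m σ t - cY m σ t'| := by
  unfold cSum
  refine Finset.sum_congr rfl fun t _ => ?_
  rw [← sum_flip]
  simp_rw [cX_compl, cY_compl, sub_neg_eq_add, ← sub_eq_add_neg]

/-- In contrast to `fSum_succ` there is no dependence on the shift: the perturbed values of
`Y - Y'` have equal weights, so the perturbation averages out off the diagonal. -/
lemma cSum_succ (m : ℕ) (σ : Fin (m + 1) → Bool) :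
    cSum (m + 1) σ = cSum m (Fin.init σ) + bSum m (Fin.init σ)
      + 1 / 2 ^ m * ∑ t, |cX m t| := by
  rw [cSum_eq, cSum_eq]
  unfold bSum
  rw [sum_snoc₂]
  simp_rw [cX_snoc, cY_snoc]
  set e := rad (σ (Fin.last m)) with he
  have : ∀ t t' : Fin m → Bool, ∀ x x' y y' : ℝ, x = cX m t → x' = cX m t' →
      y = cY m (Fin.init σ) t → y' = cY m (Fin.init σ) t' → ∀ k : ℝ, k = 1 / 2 ^ m / 4 →
      |x / 2 + rad true / 4 + (x' / 2 + rad true / 4)|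
        * |y - e * rad true * k - (y' - e * rad true * k)|
      + |x / 2 + rad true / 4 + (x' / 2 + rad false / 4)|
        * |y - e * rad true * k - (y' - e * rad false * k)|
      + |x / 2 + rad false / 4 + (x' / 2 + rad true / 4)|
        * |y - e * rad false * k - (y' - e * rad true * k)|
      + |x / 2 + rad false / 4 + (x' / 2 + rad false / 4)|
        * |y - e * rad false * k - (y' - e * rad false * k)|
      = |x + x'| * |y - y'| + |y - y'| + (if t = t' then 4 * k * |x| else 0) := by
    intro t t' x x' y y' hx hx' hy hy' k hk
    have hp : (0:ℝ) < 1 / 2 ^ m := by positivity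
    have hk0 : 0 < k := by rw [hk]; linarith
    have hX := abs_cX_sub_lt m t (flipAll m t')
    rw [cX_compl, sub_neg_eq_add, ← hx, ← hx'] at hX
    obtain ⟨hX1, hX2⟩ := abs_lt.mp hX
    have hpair : |y - y' - 2 * (e * k)| + |y - y' + 2 * (e * k)|
        = |y - y' - 2 * k| + |y - y' + 2 * k| := by
      rcases rad_cases (σ (Fin.last m)) with h | h <;> rw [he, h] <;> ring_nf
    rw [show y - e * rad true * k - (y' - e * rad true * k) = y - y' by ring,
      show y - e * rad false * k - (y' - e * rad false * k) = y - y' by ring,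
      show rad true = 1 from rfl, show rad false = -1 from rfl,
      abs_of_pos (show 0 < x / 2 + 1 / 4 + (x' / 2 + 1 / 4) by linarith),
      abs_of_neg (show x / 2 + -1 / 4 + (x' / 2 + -1 / 4) < 0 by linarith),
      show x / 2 + 1 / 4 + (x' / 2 + -1 / 4) = (x + x') / 2 by ring,
      show x / 2 + -1 / 4 + (x' / 2 + 1 / 4) = (x + x') / 2 by ring,
      show y - e * 1 * k - (y' - e * -1 * k) = y - y' - 2 * (e * k) by ring,
      show y - e * -1 * k - (y' - e * 1 * k) = y - y' + 2 * (e * k) by ring, abs_div, abs_two]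
    have hsum : |y - y' - 2 * k| + |y - y' + 2 * k| = 2 * |y - y'| + if t = t' then 4 * k else 0 := by
      split_ifs with h
      · subst h
        rw [← hy'] at hy
        rw [hy, sub_self, zero_sub, zero_add, abs_neg, abs_of_pos (by linarith), abs_zero]; ring
      · have := cY_sep m (Fin.init σ) t t' h
        rw [← hy, ← hy'] at this
        rw [abs_pair hk0.le (by linarith), add_zero]
    have hxx : |x + x'| / 2 * (if t = t' then 4 * k else 0) = if t = t' then 4 * k * |x| else 0 := by
      split_ifs with h
      · subst h
        rw [← hx'] at hx
        rw [hx, ← two_mul, abs_mul, abs_two]; ring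
      · ring
    rw [← hxx]
    linear_combination |x + x'| / 2 * (hpair.trans hsum)
  simp_rw [fun t t' => this t t' _ _ _ _ rfl rfl rfl rfl _ rfl, Finset.sum_add_distrib]
  simp only [Finset.sum_ite_eq, Finset.mem_univ, if_true, ← Finset.mul_sum]
  ring

/-! ### Assembling Warnock's formula -/

/-- The terms in `wSum` from `fSum_succ` and `qSum_succ` cancel, which makes the right-hand side
independent of the shift. The formula fails for `m = 0`, where the sum of `|X|` is `0` and not
`2^m / 4`. -/
lemma kSum_eq (m : ℕ) (σ : Fin (m + 1) → Bool) :
    (fSum (m + 1) σ + cSum (m + 1) σ) / 2 - 2 * 2 ^ (m + 1) * qSum (m + 1) σ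
      = 7 / 72 * (2 ^ (m + 1)) ^ 2 + (m + 1) / 24 - 5 / 24 - (1 / 2 ^ (m + 1)) ^ 2 / 72 := by
  induction m with
  | zero =>
    rw [fSum_succ, cSum_succ, qSum_succ, gSum_eq, bSum_eq]
    simp [fSum, cSum, qSum, wSum, cX_zero, cY_zero]
    norm_num
  | succ m ih =>
    have ih := ih (Fin.init σ)
    rw [fSum_succ, cSum_succ, qSum_succ, gSum_eq, bSum_eq, eSum_succ]
    have hQ : ∀ w : ℝ, rad (σ (Fin.last (m + 1))) * (1 / 2 ^ (m + 1) / 2) * (4 * 2 ^ (m + 1) * w)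
        = 2 * rad (σ (Fin.last (m + 1))) * w := by
      intro w; field_simp; ring
    rw [hQ]
    push_cast
    rw [show (2:ℝ) ^ (m + 1 + 1) = 2 * 2 ^ (m + 1) by ring]
    have hM : (2:ℝ) ^ m = 2 ^ (m + 1) / 2 := by ring
    rw [hM]
    have hpos : (0:ℝ) < 2 ^ (m + 1) := by positivity
    generalize (2:ℝ) ^ (m + 1) = M at *
    generalize wSum (m + 1) (Fin.init σ) = W at *
    generalize rad (σ (Fin.last (m + 1))) = e at *
    have ih' : (fSum (m + 1) (Fin.init σ) + cSum (m + 1) (Fin.init σ)) / 2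
      = 7 / 72 * M ^ 2 + (m + 1) / 24 - 5 / 24 - (1 / M) ^ 2 / 72
        + 2 * M * qSum (m + 1) (Fin.init σ) := by linarith
    generalize qSum (m + 1) (Fin.init σ) = Q at *
    have : fSum (m + 1) (Fin.init σ) = 2 * (7 / 72 * M ^ 2 + (m + 1) / 24 - 5 / 24
      - (1 / M) ^ 2 / 72 + 2 * M * Q) - cSum (m + 1) (Fin.init σ) := by linarith
    rw [this]
    field_simp
    ring

lemma max_eq_half (a b : ℝ) : max a b = (a + b + |a - b|) / 2 := by
  rcases le_total a b with h | h
  · rw [max_eq_right h, abs_of_nonpos (by linarith)]; ring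
  · rw [max_eq_left h, abs_of_nonneg (by linarith)]; ring

/-- The double sum in Warnock's formula, up to the translation by `c`; the second factor collects
the four choices of copies of the two points. -/
lemma pairSum_eq (m : ℕ) (σ : Fin m → Bool) (c : ℝ) :
    ∑ t, ∑ t', (c - max (cX m t) (cX m t'))
        * ((c - max (cY m σ t) (cY m σ t')) + (c - max (cY m σ t) (-cY m σ t'))
          + (c - max (-cY m σ t) (cY m σ t')) + (c - max (-cY m σ t) (-cY m σ t')))
      = 4 * c ^ 2 * (2 ^ m) ^ 2 - 4 * c * (((2 ^ m) ^ 2 - 1) / 3) + (fSum m σ + cSum m σ) / 2 := by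
  have hB' : ∑ t, ∑ t', |cY m σ t + cY m σ t'| = bSum m σ := by
    unfold bSum
    refine Finset.sum_congr rfl fun t _ => ?_
    rw [← sum_flip]
    simp_rw [cY_compl, ← sub_eq_add_neg]
  -- the part linear in `X` is odd under complementing all bits of both indices
  have hodd : ∑ t, ∑ t', (cX m t + cX m t')
      * (4 * c - |cY m σ t - cY m σ t'| - |cY m σ t + cY m σ t'|) = 0 := by
    have : ∑ t, ∑ t', (cX m t + cX m t')
          * (4 * c - |cY m σ t - cY m σ t'| - |cY m σ t + cY m σ t'|)
        = - ∑ t, ∑ t', (cX m t + cX m t')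
          * (4 * c - |cY m σ t - cY m σ t'| - |cY m σ t + cY m σ t'|) := by
      conv_lhs => rw [← sum_flip]
      rw [← Finset.sum_neg_distrib]
      refine Finset.sum_congr rfl fun t _ => ?_
      rw [← sum_flip, ← Finset.sum_neg_distrib]
      refine Finset.sum_congr rfl fun t' _ => ?_
      rw [cX_compl, cX_compl, cY_compl, cY_compl, ← abs_neg (-cY m σ t - -cY m σ t'),
        ← abs_neg (-cY m σ t + -cY m σ t')]
      ring_nf
    linarith
  have hpt : ∀ t t', (c - max (cX m t) (cX m t'))
        * ((c - max (cY m σ t) (cY m σ t')) + (c - max (cY m σ t) (-cY m σ t'))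
          + (c - max (-cY m σ t) (cY m σ t')) + (c - max (-cY m σ t) (-cY m σ t')))
      = 4 * c ^ 2 - 2 * c * |cX m t - cX m t'| - c * |cY m σ t - cY m σ t'|
        - c * |cY m σ t + cY m σ t'| + 1 / 2 * (|cX m t - cX m t'| * |cY m σ t - cY m σ t'|)
        + 1 / 2 * (|cX m t - cX m t'| * |cY m σ t + cY m σ t'|)
        - 1 / 2 * ((cX m t + cX m t')
          * (4 * c - |cY m σ t - cY m σ t'| - |cY m σ t + cY m σ t'|)) := by
    intro t t'
    simp only [max_eq_half, sub_neg_eq_add]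
    rw [show -cY m σ t - cY m σ t' = -(cY m σ t + cY m σ t') by ring, abs_neg,
      show -cY m σ t + cY m σ t' = -(cY m σ t - cY m σ t') by ring, abs_neg]
    ring
  simp_rw [hpt, Finset.sum_sub_distrib, Finset.sum_add_distrib, Finset.sum_sub_distrib,
    ← Finset.mul_sum]
  rw [hodd, hB', ← aSum, ← bSum, ← fSum, ← cSum, aSum_eq, bSum_eq, sum_const₂]
  ring

/-- The single sum in Warnock's formula; `μ` is the translation between original and centred
coordinates. -/
lemma crossSum_eq (m : ℕ) (σ : Fin m → Bool) (μ : ℝ) :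
    ∑ t, (1 - (cX m t + μ) ^ 2)
        * ((1 - (cY m σ t + μ) ^ 2) + (1 - (-cY m σ t + μ) ^ 2))
      = 2 * ((1 - μ ^ 2) ^ 2 * 2 ^ m - 2 * (1 - μ ^ 2) * ((2 ^ m - 1 / 2 ^ m) / 12)
        + qSum m σ) := by
  have hodd : ∑ t, cX m t * (1 - μ ^ 2 - cY m σ t ^ 2) = 0 := by
    have : ∑ t, cX m t * (1 - μ ^ 2 - cY m σ t ^ 2)
        = - ∑ t, cX m t * (1 - μ ^ 2 - cY m σ t ^ 2) := by
      conv_lhs => rw [← sum_flip]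
      simp_rw [cX_compl, cY_compl, neg_sq, neg_mul]
      rw [Finset.sum_neg_distrib]
    linarith
  have hpt : ∀ t, (1 - (cX m t + μ) ^ 2)
        * ((1 - (cY m σ t + μ) ^ 2) + (1 - (-cY m σ t + μ) ^ 2))
      = 2 * (1 - μ ^ 2) ^ 2 - 2 * (1 - μ ^ 2) * cX m t ^ 2 - 2 * (1 - μ ^ 2) * cY m σ t ^ 2
        + 2 * (cX m t ^ 2 * cY m σ t ^ 2)
        - 4 * μ * (cX m t * (1 - μ ^ 2 - cY m σ t ^ 2)) := by
    intro t; ring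
  simp_rw [hpt]
  rw [Finset.sum_sub_distrib, Finset.sum_add_distrib, Finset.sum_sub_distrib,
    Finset.sum_sub_distrib]
  simp_rw [← Finset.mul_sum]
  rw [hodd, ← qSum, sqSum_cX, sqSum_cY, Finset.sum_const, nsmul_eq_mul, card_bits]
  ring

/-- The second coordinates of the symmetrized point set, indexed by a point and a copy. -/
noncomputable def symY (m : ℕ) (σ : Fin m → Bool) (p : (Fin m → Bool) × Bool) : ℝ :=
  if p.2 then hamY m σ p.1 else hamY m (fun j => !(σ j)) p.1

lemma Δsym_eq (m : ℕ) (σ : Fin m → Bool) (α β : ℝ) :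
    Δsym m σ α β = (∑ p : (Fin m → Bool) × Bool, wfun (hamX m p.1) α * wfun (symY m σ p) β)
      - 2 ^ (m + 1) * α * β := by
  have hmul : ∀ a b : ℝ, wfun a α * wfun b β = if a < α ∧ b < β then 1 else 0 := by
    intro a b
    unfold wfun
    by_cases h1 : a < α <;> by_cases h2 : b < β <;> simp [h1, h2]
  unfold Δsym
  simp only [Fintype.sum_prod_type, Fintype.sum_bool, symY, if_true, Bool.false_eq_true,
    if_false, Finset.sum_add_distrib]
  simp only [hmul, Finset.sum_boole]

theorem stmt10 (m : ℕ) (hm : 1 ≤ m) (σ : Fin m → Bool) :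
    (∫ α in (0:ℝ)..1, ∫ β in (0:ℝ)..1, (Δsym m σ α β) ^ 2)
      = (m : ℝ) / 24 + 11 / 8 + 1 / 2 ^ m - 1 / (9 * 2 ^ (2 * m + 1)) := by
  simp_rw [Δsym_eq]
  have hp : (0:ℝ) < 1 / 2 ^ m := by positivity
  have hX : ∀ t, hamX m t = cX m t + (1 / 2 - 1 / 2 ^ m / 2) := fun t => by unfold cX; ring
  have hY : ∀ t, hamY m σ t = cY m σ t + (1 / 2 - 1 / 2 ^ m / 2) := fun t => by unfold cY; ring
  have hY' : ∀ t, hamY m (fun j => !(σ j)) t = -cY m σ t + (1 / 2 - 1 / 2 ^ m / 2) := fun t => by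
    rw [← cY_compl_shift]; unfold cY; ring
  rw [warnock (fun p : (Fin m → Bool) × Bool => hamX m p.1) (symY m σ)]
  rotate_left
  · intro p
    have := abs_le.mp (abs_cX_le m p.1)
    rw [hX]; constructor <;> linarith
  · intro p
    have := abs_le.mp (abs_cY_le m σ p.1)
    unfold symY
    split_ifs
    · rw [hY]; constructor <;> linarith
    · rw [hY']; constructor <;> linarith
  obtain ⟨n, rfl⟩ : ∃ n, m = n + 1 := ⟨m - 1, by omega⟩
  have hpair := pairSum_eq (n + 1) σ (1 / 2 + 1 / 2 ^ (n + 1) / 2)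
  have hcross := crossSum_eq (n + 1) σ (1 / 2 - 1 / 2 ^ (n + 1) / 2)
  have hK := kSum_eq n σ
  have h1 : ∑ p : (Fin (n + 1) → Bool) × Bool, ∑ q : (Fin (n + 1) → Bool) × Bool,
      (1 - max (hamX (n + 1) p.1) (hamX (n + 1) q.1)) * (1 - max (symY (n + 1) σ p) (symY (n + 1) σ q))
      = ∑ t, ∑ t', (1 / 2 + 1 / 2 ^ (n + 1) / 2 - max (cX (n + 1) t) (cX (n + 1) t'))
        * ((1 / 2 + 1 / 2 ^ (n + 1) / 2 - max (cY (n + 1) σ t) (cY (n + 1) σ t'))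
          + (1 / 2 + 1 / 2 ^ (n + 1) / 2 - max (cY (n + 1) σ t) (-cY (n + 1) σ t'))
          + (1 / 2 + 1 / 2 ^ (n + 1) / 2 - max (-cY (n + 1) σ t) (cY (n + 1) σ t'))
          + (1 / 2 + 1 / 2 ^ (n + 1) / 2 - max (-cY (n + 1) σ t) (-cY (n + 1) σ t'))) := by
    simp only [Fintype.sum_prod_type, Fintype.sum_bool, symY, if_true, Bool.false_eq_true, if_false,
      hX, hY, hY', max_add_add_right]
    refine Finset.sum_congr rfl fun t _ => ?_
    rw [← Finset.sum_add_distrib]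
    refine Finset.sum_congr rfl fun t' _ => ?_
    ring
  have h2 : ∑ p : (Fin (n + 1) → Bool) × Bool, (1 - hamX (n + 1) p.1 ^ 2) * (1 - symY (n + 1) σ p ^ 2)
      = ∑ t, (1 - (cX (n + 1) t + (1 / 2 - 1 / 2 ^ (n + 1) / 2)) ^ 2)
        * ((1 - (cY (n + 1) σ t + (1 / 2 - 1 / 2 ^ (n + 1) / 2)) ^ 2)
          + (1 - (-cY (n + 1) σ t + (1 / 2 - 1 / 2 ^ (n + 1) / 2)) ^ 2)) := by
    simp only [Fintype.sum_prod_type, Fintype.sum_bool, symY, if_true, Bool.false_eq_true, if_false,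
      hX, hY, hY', mul_add]
  rw [h1, h2, hpair, hcross]
  have hF : (fSum (n + 1) σ + cSum (n + 1) σ) / 2 = 7 / 72 * (2 ^ (n + 1)) ^ 2 + (n + 1) / 24 - 5 / 24
      - (1 / 2 ^ (n + 1)) ^ 2 / 72 + 2 * 2 ^ (n + 1) * qSum (n + 1) σ := by linarith
  rw [hF]
  push_cast
  rw [show (2:ℝ) ^ (n + 1 + 1) = 2 * 2 ^ (n + 1) by ring,
    show (2:ℝ) ^ (2 * (n + 1) + 1) = 2 * (2 ^ (n + 1)) ^ 2 by ring]
  have hM : (2:ℝ) ^ (n + 1) ≠ 0 := by positivity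
  generalize (2:ℝ) ^ (n + 1) = M at hM ⊢
  field_simp
  ring
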